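/- Let 𝒢 be an infinite connected bipartite graph of bounded valance with bipartition 𝒱 = 𝒜 ⊔ ℬ and with no vertices of valance one. Let λ ≥ 2 and let θ ∈ S¹ be λ-renormalizable, with λ-shrinking sequence ⟨g_n⟩ and sign sequence ⟨s_n⟩. Then for every θ-survivor f ∈ ℝ^𝒱 and every vertex v ∈ 𝒱, the sequence n ↦ |Υ^{g_n}(f)(v)| is (non-strictly) monotone decreasing and tends to 0 as n → ∞. -/

import Mathlib

noncomputable section

abbrev F2 := FreeGroup Bool

def gh : F2 := FreeGroup.of true
def gv : F2 := FreeGroup.of false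

def hmat (l : ℝ) : Matrix.SpecialLinearGroup (Fin 2) ℝ :=
  ⟨!![1, l; 0, 1], by norm_num [Matrix.det_fin_two_of]⟩

def vmat (l : ℝ) : Matrix.SpecialLinearGroup (Fin 2) ℝ :=
  ⟨!![1, 0; l, 1], by norm_num [Matrix.det_fin_two_of]⟩

def rho (l : ℝ) : F2 →* Matrix.SpecialLinearGroup (Fin 2) ℝ :=
  FreeGroup.lift fun b => if b then hmat l else vmat l

def act (l : ℝ) (g : F2) (x : Fin 2 → ℝ) : Fin 2 → ℝ :=
  (rho l g).val.mulVec x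

def nrm (x : Fin 2 → ℝ) : ℝ := Real.sqrt (x 0 ^ 2 + x 1 ^ 2)

def Circ : Set (Fin 2 → ℝ) := {x | nrm x = 1}

def gens : Set F2 := {gh, gv, gh⁻¹, gv⁻¹}

def ShrinkSet (l : ℝ) (g : F2) : Set (Fin 2 → ℝ) :=
  {x | x ∈ Circ ∧ nrm (act l g x) < 1}

def ExpSet (l : ℝ) (g : F2) : Set (Fin 2 → ℝ) :=
  {x | x ∈ Circ ∧ 1 < nrm (act l g x)}

def IsGeodesicRay (g : ℕ → F2) : Prop :=
  g 0 = 1 ∧ (∀ n, g (n + 1) * (g n)⁻¹ ∈ gens) ∧ ∀ n, g (n + 2) * (g n)⁻¹ ≠ 1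

def IsGeodesicSegment (g : ℕ → F2) (N : ℕ) : Prop :=
  g 0 = 1 ∧ (∀ n, n + 1 ≤ N → g (n + 1) * (g n)⁻¹ ∈ gens) ∧
    ∀ n, n + 2 ≤ N → g (n + 2) * (g n)⁻¹ ≠ 1

def IsShrinkingSeq (l : ℝ) (g : ℕ → F2) (θ : Fin 2 → ℝ) : Prop :=
  ∀ ε : ℝ, 0 < ε → ∃ i : ℕ, nrm (act l (g i) θ) < ε

def Shrinkable (l : ℝ) (θ : Fin 2 → ℝ) : Prop :=
  ∀ ε : ℝ, 0 < ε → ∃ g : F2, nrm (act l g θ) < ε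

def Renormalizable (l : ℝ) (θ : Fin 2 → ℝ) : Prop :=
  Shrinkable l θ ∧ ∀ k : F2, ∀ c : ℝ, act l (k * (gh * gv⁻¹) * k⁻¹) θ ≠ c • θ

abbrev SP := Bool × Bool

def Quad (s : SP) : Set (Fin 2 → ℝ) :=
  {x | (if s.1 then 0 < x 0 else x 0 < 0) ∧ (if s.2 then 0 < x 1 else x 1 < 0)}

def letterSigma : Bool × Bool → SP → SP
  | (true, true), s => (s.2, s.2)
  | (false, true), s => (s.1, s.1)
  | (true, false), s => (!s.2, s.2)
  | (false, false), s => (s.1, !s.1)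

def SigmaAct (g : F2) : SP → SP :=
  (FreeGroup.toWord g).foldr (fun w acc => letterSigma w ∘ acc) id

def gammaAut : F2 →* F2 := FreeGroup.lift fun b => if b then gv⁻¹ else gh⁻¹

def rPerm (s : SP) : SP := (!s.2, s.1)

def rPermInv (s : SP) : SP := (s.2, !s.1)

def shiftRay (g : ℕ → F2) : ℕ → F2 := fun n => g (n + 1) * (g 1)⁻¹

def TailEquiv (g g' : ℕ → F2) : Prop :=
  ∃ m n : ℕ, shiftRay^[m] g = shiftRay^[n] g'

def seqPow (a : F2) : ℕ → F2 := fun n => a ^ n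

def seqPer (a b : F2) : ℕ → F2 := fun n =>
  if n % 2 = 0 then (b * a) ^ (n / 2) else a * (b * a) ^ (n / 2)

def Cond1 (g : ℕ → F2) : Prop :=
  ¬ TailEquiv g (seqPow gh) ∧ ¬ TailEquiv g (seqPow gh⁻¹) ∧
    ¬ TailEquiv g (seqPow gv) ∧ ¬ TailEquiv g (seqPow gv⁻¹)

def Cond2 (g : ℕ → F2) : Prop :=
  ¬ TailEquiv g (seqPer gh gv⁻¹) ∧ ¬ TailEquiv g (seqPer gh⁻¹ gv)

def adjSum {V : Type} (G : SimpleGraph V) (f : V → ℝ) (v : V) : ℝ :=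
  ∑ᶠ w ∈ G.neighborSet v, f w

def BoundedValance {V : Type} (G : SimpleGraph V) : Prop :=
  ∃ D : ℕ, ∀ v, (G.neighborSet v).Finite ∧ (G.neighborSet v).ncard ≤ D

def BipartWith {V : Type} (G : SimpleGraph V) (A : Set V) : Prop :=
  ∀ v w, G.Adj v w → (v ∈ A ↔ w ∉ A)

def Hop {V : Type} (G : SimpleGraph V) (A : Set V) (k : ℤ) (f : V → ℝ) : V → ℝ :=
  fun v => f v + (k : ℝ) * Set.indicator A (adjSum G f) v

def Vop {V : Type} (G : SimpleGraph V) (A : Set V) (k : ℤ) (f : V → ℝ) : V → ℝ :=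
  fun v => f v + (k : ℝ) * Set.indicator Aᶜ (adjSum G f) v

def QuadV {V : Type} (A : Set V) (s : SP) : Set (V → ℝ) :=
  {f | (∀ v ∈ A, f v = 0 ∨ (if s.1 then 0 < f v else f v < 0)) ∧
       ∀ v, v ∉ A → f v = 0 ∨ (if s.2 then 0 < f v else f v < 0)}

def valance {V : Type} (G : SimpleGraph V) (v : V) : ℕ := (G.neighborSet v).ncard

def evec {V : Type} (v : V) : V → ℝ := Set.indicator {v} 1

def InSpoke {V : Type} (G : SimpleGraph V) (x : V) : Prop :=
  ∃ k : ℕ, 2 ≤ k ∧ ∃ c : ℕ → V,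
    (∀ i j, 1 ≤ i → i ≤ k → 1 ≤ j → j ≤ k → c i = c j → i = j) ∧
    valance G (c 1) = 1 ∧
    (∀ i, 2 ≤ i → i ≤ k - 1 →
      valance G (c i) = 2 ∧ G.Adj (c i) (c (i - 1)) ∧ G.Adj (c i) (c (i + 1))) ∧
    ∃ i, 1 ≤ i ∧ i ≤ k ∧ x = c i

lemma aux_no_lower (r : ℕ → ℝ) (hpos : ∀ n, 0 < r n) (hsm : ∀ ε : ℝ, 0 < ε → ∃ n, r n < ε) :
    ∀ N : ℕ, ∀ c : ℝ, 0 < c → (∀ n, N ≤ n → c ≤ r n) → False := by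
  intro N
  induction N with
  | zero =>
    intro c hc h
    obtain ⟨n, hn⟩ := hsm c hc
    exact absurd (h n (Nat.zero_le n)) (not_le.mpr hn)
  | succ N ih =>
    intro c hc h
    refine ih (min c (r N)) (lt_min hc (hpos N)) ?_
    intro n hn
    rcases Nat.eq_or_lt_of_le hn with h1 | h1
    · subst h1; exact min_le_right _ _
    · exact (min_le_left _ _).trans (h n h1)

lemma aux_other (l e x y : ℝ) (hl : 2 ≤ l) (he : e = 1 ∨ e = -1) (hx : x ≠ 0)
    (h : y ^ 2 ≤ x ^ 2) : x ^ 2 ≤ (y + e * l * x) ^ 2 ∧ 0 < e * x * (y + e * l * x) := by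
  have hxx : 0 < x ^ 2 := by positivity
  have hxy : |x * y| ≤ x ^ 2 := by
    rw [abs_le]; constructor <;> nlinarith [sq_nonneg (x - y), sq_nonneg (x + y)]
  have he2 : e * e = 1 := by rcases he with rfl | rfl <;> norm_num
  have hxy' := abs_le.mp hxy
  have key : x ^ 2 ≤ e * x * (y + e * l * x) := by
    have h1 : e * x * (y + e * l * x) = e * (x * y) + l * x ^ 2 := by
      linear_combination (l * x ^ 2) * he2
    rw [h1]
    have : -(x ^ 2) ≤ e * (x * y) := by rcases he with rfl | rfl <;> linarith [hxy'.1, hxy'.2]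
    nlinarith
  refine ⟨?_, by linarith⟩
  set z := y + e * l * x
  have h2 : (e * x) * (e * x) = x ^ 2 := by linear_combination x ^ 2 * he2
  nlinarith [sq_nonneg (e * x - z)]

lemma aux_same (l e x y : ℝ) (hl : 2 ≤ l) (he : e = 1 ∨ e = -1) (hy : y ≠ 0)
    (h : 0 < e * x * y) :
    x ^ 2 ≤ (x + e * l * y) ^ 2 ∧ y ^ 2 ≤ (x + e * l * y) ^ 2 ∧ 0 < e * (x + e * l * y) * y := by
  have hyy : 0 < y ^ 2 := by positivity
  have he2 : e * e = 1 := by rcases he with rfl | rfl <;> norm_num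
  have h1 : (x + e * l * y) ^ 2 = x ^ 2 + 2 * l * (e * x * y) + l ^ 2 * y ^ 2 := by
    linear_combination (l ^ 2 * y ^ 2) * he2
  have h2 : e * (x + e * l * y) * y = e * x * y + l * y ^ 2 := by
    linear_combination (l * y ^ 2) * he2
  have h3 : 0 < 2 * l * (e * x * y) := by positivity
  have h4 : y ^ 2 ≤ l ^ 2 * y ^ 2 := by
    have : 1 ≤ l ^ 2 := by nlinarith
    nlinarith
  rw [h1, h2]
  refine ⟨by nlinarith, by nlinarith [sq_nonneg x], by nlinarith⟩

structure RealDat (l : ℝ) (p q : ℕ → ℝ) (b : ℕ → Bool) (e : ℕ → ℝ) : Prop where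
  hl : 2 ≤ l
  hp : ∀ n, p n ≠ 0
  hq : ∀ n, q n ≠ 0
  he : ∀ n, e n = 1 ∨ e n = -1
  st : ∀ n, b n = true → p (n+1) = p n + e n * l * q n ∧ q (n+1) = q n
  sf : ∀ n, b n = false → q (n+1) = q n + e n * l * p n ∧ p (n+1) = p n
  red : ∀ n, b (n+1) = b n → e (n+1) = e n
  sm : ∀ ε : ℝ, 0 < ε → ∃ n, p n ^ 2 + q n ^ 2 < ε

namespace RealDat
variable {l : ℝ} {p q : ℕ → ℝ} {b : ℕ → Bool} {e : ℕ → ℝ}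

lemma swap (D : RealDat l p q b e) : RealDat l q p (fun n => !(b n)) e where
  hl := D.hl
  hp := D.hq
  hq := D.hp
  he := D.he
  st n h := D.sf n (by simpa using h)
  sf n h := D.st n (by simpa using h)
  red n h := D.red n (by simpa using h)
  sm ε h := by simpa only [add_comm] using D.sm ε h

lemma npos (D : RealDat l p q b e) (n : ℕ) : 0 < p n ^ 2 + q n ^ 2 := by
  have := D.hp n
  have := D.hq n
  positivity

lemma no_lower (D : RealDat l p q b e) (N : ℕ) (c : ℝ) (hc : 0 < c)
    (h : ∀ n, N ≤ n → c ≤ p n ^ 2 + q n ^ 2) : False :=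
  aux_no_lower _ D.npos D.sm N c hc h

def Inv (p q : ℕ → ℝ) (b : ℕ → Bool) (e : ℕ → ℝ) (n : ℕ) : Prop :=
  0 < e n * p (n+1) * q (n+1) ∧
  (b n = true → q (n+1) ^ 2 ≤ p (n+1) ^ 2) ∧ (b n = false → p (n+1) ^ 2 ≤ q (n+1) ^ 2)

lemma inv_step (D : RealDat l p q b e) (n : ℕ) (h : Inv p q b e n) :
    Inv p q b e (n+1) ∧ p (n+1) ^ 2 + q (n+1) ^ 2 ≤ p (n+2) ^ 2 + q (n+2) ^ 2 := by
  obtain ⟨h0, h1, h2⟩ := h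
  cases hb : b n <;> cases hb' : b (n+1)
  · have hr := D.red n (by rw [hb, hb'])
    obtain ⟨a1, a2⟩ := D.sf (n+1) hb'
    obtain ⟨c1, c2, c3⟩ := aux_same l (e n) (q (n+1)) (p (n+1)) D.hl (D.he n) (D.hp _) (by linarith)
    rw [hr] at a1
    rw [← a1] at c1 c2 c3
    refine ⟨⟨?_, by simp [hb'], fun _ => ?_⟩, ?_⟩
    · rw [hr, a2]; linarith
    · rw [a2]; exact c2
    · change _ ≤ p (n+1+1) ^ 2 + q (n+1+1)^2
      rw [a2]; linarith
  · obtain ⟨a1, a2⟩ := D.st (n+1) hb'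
    obtain ⟨c1, c2⟩ := aux_other l (e (n+1)) (q (n+1)) (p (n+1)) D.hl (D.he _) (D.hq _) (h2 hb)
    rw [← a1] at c1 c2
    have h2 := h2 hb
    refine ⟨⟨?_, fun _ => ?_, by simp [hb']⟩, ?_⟩
    · rw [a2]; linarith
    · rw [a2]; exact c1
    · change _ ≤ p (n+1+1) ^ 2 + q (n+1+1)^2
      rw [a2]; linarith
  · obtain ⟨a1, a2⟩ := D.sf (n+1) hb'
    obtain ⟨c1, c2⟩ := aux_other l (e (n+1)) (p (n+1)) (q (n+1)) D.hl (D.he _) (D.hp _) (h1 hb)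
    rw [← a1] at c1 c2
    have h1 := h1 hb
    refine ⟨⟨?_, by simp [hb'], fun _ => ?_⟩, ?_⟩
    · rw [a2]; linarith
    · rw [a2]; exact c1
    · change _ ≤ p (n+1+1) ^ 2 + q (n+1+1)^2
      rw [a2]; linarith
  · have hr := D.red n (by rw [hb, hb'])
    obtain ⟨a1, a2⟩ := D.st (n+1) hb'
    obtain ⟨c1, c2, c3⟩ := aux_same l (e n) (p (n+1)) (q (n+1)) D.hl (D.he n) (D.hq _) (by linarith)
    rw [hr] at a1
    rw [← a1] at c1 c2 c3
    refine ⟨⟨?_, fun _ => ?_, by simp [hb']⟩, ?_⟩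
    · rw [hr, a2]; linarith
    · rw [a2]; exact c2
    · change _ ≤ p (n+1+1) ^ 2 + q (n+1+1)^2
      rw [a2]; linarith

lemma not_inv (D : RealDat l p q b e) (n : ℕ) : ¬ Inv p q b e n := by
  intro h
  have hk : ∀ k, Inv p q b e (n+k) ∧
      p (n+1) ^ 2 + q (n+1) ^ 2 ≤ p (n+k+1) ^ 2 + q (n+k+1) ^ 2 := by
    intro k
    induction k with
    | zero => exact ⟨h, le_refl _⟩
    | succ k ih =>
      obtain ⟨i1, i2⟩ := D.inv_step _ ih.1
      exact ⟨i1, ih.2.trans i2⟩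
  refine D.no_lower (n+1) _ (D.npos (n+1)) ?_
  intro m hm
  obtain ⟨k, rfl⟩ := Nat.exists_eq_add_of_le hm
  have := (hk k).2
  rwa [show n + k + 1 = n + 1 + k by ring] at this

lemma neg (D : RealDat l p q b e) (n : ℕ) : e n * p n * q n < 0 := by
  by_contra hcon
  have hne : e n * p n * q n ≠ 0 := by
    refine mul_ne_zero (mul_ne_zero ?_ (D.hp n)) (D.hq n)
    rcases D.he n with h | h <;> rw [h] <;> norm_num
  have hpos : 0 < e n * p n * q n := lt_of_le_of_ne (not_lt.mp hcon) hne.symm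
  apply D.not_inv n
  cases hb : b n
  · obtain ⟨a1, a2⟩ := D.sf n hb
    obtain ⟨c1, c2, c3⟩ := aux_same l (e n) (q n) (p n) D.hl (D.he n) (D.hp _) (by linarith)
    rw [← a1] at c2 c3
    refine ⟨?_, by simp [hb], fun _ => ?_⟩
    · rw [a2]; linarith
    · rw [a2]; exact c2
  · obtain ⟨a1, a2⟩ := D.st n hb
    obtain ⟨c1, c2, c3⟩ := aux_same l (e n) (p n) (q n) D.hl (D.he n) (D.hq _) (by linarith)
    rw [← a1] at c2 c3
    refine ⟨?_, fun _ => ?_, by simp [hb]⟩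
    · rw [a2]; linarith
    · rw [a2]; exact c2

lemma inf_false (D : RealDat l p q b e) (N : ℕ) : ∃ n, N ≤ n ∧ b n = false := by
  by_contra hcon
  push Not at hcon
  have hc : ∀ k, q (N + k) = q N := by
    intro k
    induction k with
    | zero => rfl
    | succ k ih =>
      rw [← ih]
      exact (D.st (N+k) (by simpa using hcon (N+k) (by omega))).2
  have := D.hq N
  refine D.no_lower N (q N ^ 2) (by positivity) ?_
  intro m hm
  obtain ⟨k, rfl⟩ := Nat.exists_eq_add_of_le hm
  rw [hc k]
  nlinarith [sq_nonneg (p (N+k))]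

lemma inf_both (D : RealDat l p q b e) (c : Bool) (N : ℕ) : ∃ n, N ≤ n ∧ b n = c := by
  cases c
  · exact D.inf_false N
  · simpa using D.swap.inf_false N

def Flip (p q : ℕ → ℝ) (n : ℕ) : Prop := (p (n+1) * q (n+1)) * (p n * q n) < 0

lemma flip_e (D : RealDat l p q b e) (n : ℕ) (h : Flip p q n) : e (n+1) = - e n := by
  have h1 := D.neg n
  have h2 := D.neg (n+1)
  unfold Flip at h
  rw [mul_assoc] at h1 h2
  rcases D.he n with a | a <;> rcases D.he (n+1) with a' | a' <;> rw [a] at h1 <;> rw [a'] at h2 <;>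
    rw [a, a'] <;> first | (norm_num; done) | (exfalso; nlinarith)

lemma flip_b (D : RealDat l p q b e) (n : ℕ) (h : Flip p q n) : b (n+1) = !(b n) := by
  have h1 := D.flip_e n h
  by_contra hcon
  have := D.red n (by simpa using hcon)
  rcases D.he n with a | a <;> rw [a] at h1 this <;> rw [this] at h1 <;> norm_num at h1

lemma flip_Q (D : RealDat l p q b e) (n : ℕ) (h : Flip p q n) :
    p (n+1) ^ 2 + q (n+1) ^ 2 + l * (e (n+1) * p (n+1) * q (n+1)) =
    p n ^ 2 + q n ^ 2 + l * (e n * p n * q n) := by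
  rw [D.flip_e n h]
  have he2 : e n * e n = 1 := by rcases D.he n with h | h <;> rw [h] <;> norm_num
  cases hb : b n
  · obtain ⟨a1, a2⟩ := D.sf n hb
    rw [a1, a2]; ring
  · obtain ⟨a1, a2⟩ := D.st n hb
    rw [a1, a2]; ring

lemma inf_nonflip (D : RealDat l p q b e)
    (hQ : ∀ n, 0 < p n * q n → p n ^ 2 + q n ^ 2 - l * (p n * q n) ≠ 0) (N : ℕ) :
    ∃ n, N ≤ n ∧ ¬ Flip p q n := by
  by_contra hcon
  push Not at hcon
  have hc : ∀ k, p (N+k) ^ 2 + q (N+k) ^ 2 + l * (e (N+k) * p (N+k) * q (N+k)) =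
      p N ^ 2 + q N ^ 2 + l * (e N * p N * q N) := by
    intro k
    induction k with
    | zero => rfl
    | succ k ih => rw [← ih]; exact D.flip_Q (N+k) (hcon _ (by omega))
  set c := p N ^ 2 + q N ^ 2 + l * (e N * p N * q N) with hcdef
  have hl := D.hl
  have hc0 : c = 0 := by
    by_contra hne
    refine D.no_lower N (|c| / (1 + l)) (by positivity) ?_
    intro m hm
    obtain ⟨k, rfl⟩ := Nat.exists_eq_add_of_le hm
    rw [div_le_iff₀ (by positivity), ← hc k]
    set x := p (N+k)
    set y := q (N+k)
    have h1 : |e (N+k) * x * y| ≤ x ^ 2 + y ^ 2 := by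
      rw [abs_le]
      rcases D.he (N+k) with h | h <;> rw [h] <;> constructor <;>
        nlinarith [sq_nonneg (x - y), sq_nonneg (x + y)]
    calc |x ^ 2 + y ^ 2 + l * (e (N+k) * x * y)| ≤ |x ^ 2 + y ^ 2| + |l * (e (N+k) * x * y)| :=
          abs_add_le _ _
      _ ≤ (x ^ 2 + y ^ 2) + l * (x ^ 2 + y ^ 2) := by
          rw [abs_mul, abs_of_nonneg (by positivity : (0:ℝ) ≤ x ^ 2 + y ^ 2),
            abs_of_nonneg (by linarith : (0:ℝ) ≤ l)]
          nlinarith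
      _ = _ := by ring
  have hfin : ∀ k, e (N+k) = -1 → False := by
    intro k hk
    have h1 := D.neg (N+k)
    have h2 := hc k
    rw [hk] at h1 h2
    exact hQ (N+k) (by linarith) (by linarith)
  rcases D.he N with h | h
  · exact hfin 1 (by rw [D.flip_e N (hcon N le_rfl), h])
  · exact hfin 0 h

end RealDat

section graphpart
variable {V : Type} {G : SimpleGraph V}

lemma adjSum_eq (hval : BoundedValance G) (f : V → ℝ) (v : V) :
    ∃ s : Finset V, (∀ w, w ∈ s ↔ G.Adj v w) ∧ ∀ f : V → ℝ, adjSum G f v = ∑ w ∈ s, f w := by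
  obtain ⟨D, hD⟩ := hval
  refine ⟨(hD v).1.toFinset, by simp, ?_⟩
  intro f
  exact finsum_mem_eq_finite_toFinset_sum _ _

lemma le_adjSum (hval : BoundedValance G) (u : V → ℝ) (hu : ∀ w, 0 ≤ u w) {v w : V}
    (h : G.Adj v w) : u w ≤ adjSum G u v := by
  obtain ⟨s, hs, hf⟩ := adjSum_eq hval u v
  rw [hf]
  exact Finset.single_le_sum (f := u) (fun i _ => hu i) ((hs w).mpr h)

lemma le_adjSum₂ (hval : BoundedValance G) (u : V → ℝ) (hu : ∀ w, 0 ≤ u w) {v w w' : V}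
    (h : G.Adj v w) (h' : G.Adj v w') (hne : w ≠ w') : u w + u w' ≤ adjSum G u v := by
  classical
  obtain ⟨s, hs, hf⟩ := adjSum_eq hval u v
  rw [hf, ← Finset.sum_pair hne]
  refine Finset.sum_le_sum_of_subset_of_nonneg ?_ (fun i _ _ => hu i)
  intro i hi
  rw [hs]
  simp at hi
  rcases hi with rfl | rfl <;> assumption

lemma adjSum_congr_mul (hval : BoundedValance G) (f u : V → ℝ) (c : ℝ) (v : V)
    (h : ∀ w, G.Adj v w → f w = c * u w) : adjSum G f v = c * adjSum G u v := by
  obtain ⟨s, hs, hf⟩ := adjSum_eq hval u v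
  rw [hf, hf, Finset.mul_sum]
  exact Finset.sum_congr rfl (fun w hw => h w ((hs w).mp hw))

lemma adj_exists [Infinite V] (hconn : G.Connected) (v : V) : ∃ w, G.Adj v w :=
  hconn.preconnected.exists_adj_of_nontrivial v

lemma adj_exists₂ [Infinite V] (hconn : G.Connected) (hval : BoundedValance G)
    (hno : ∀ v : V, valance G v ≠ 1) {v w : V} (h : G.Adj v w) : ∃ w', G.Adj v w' ∧ w ≠ w' := by
  by_contra hcon
  push Not at hcon
  apply hno v
  unfold valance
  rw [Set.ncard_eq_one]
  refine ⟨w, ?_⟩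
  ext z
  simp only [SimpleGraph.mem_neighborSet, Set.mem_singleton_iff]
  exact ⟨fun hz => (hcon z hz).symm, fun hz => hz ▸ h⟩

structure GDat (G : SimpleGraph V) (C : Bool → Set V) (b : ℕ → Bool) (F : ℕ → Prop)
    (u : ℕ → V → ℝ) : Prop where
  hval : BoundedValance G
  ex1 : ∀ v, ∃ w, G.Adj v w
  ex2 : ∀ v w, G.Adj v w → ∃ w', G.Adj v w' ∧ w ≠ w'
  cc : ∀ c v, v ∈ C (!c) ↔ v ∉ C c
  bip : ∀ c v w, G.Adj v w → v ∈ C c → w ∈ C (!c)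
  nn : ∀ n v, 0 ≤ u n v
  fix : ∀ n v, v ∉ C (b n) → u (n+1) v = u n v
  fl : ∀ n v, F n → v ∈ C (b n) → u (n+1) v = adjSum G (u n) v - u n v
  nf : ∀ n v, ¬ F n → v ∈ C (b n) → u (n+1) v = u n v - adjSum G (u n) v
  alt : ∀ n, F n → b (n+1) = !(b n)
  infF : ∀ N, ∃ n, N ≤ n ∧ ¬ F n
  infb : ∀ c N, ∃ n, N ≤ n ∧ b n = c

namespace GDat
variable {C : Bool → Set V} {b : ℕ → Bool} {F : ℕ → Prop} {u : ℕ → V → ℝ}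

lemma snn (D : GDat G C b F u) (n : ℕ) (v : V) : 0 ≤ adjSum G (u n) v := by
  obtain ⟨w, hw⟩ := D.ex1 v
  exact (D.nn n w).trans (le_adjSum D.hval _ (D.nn n) hw)

lemma keyP (D : GDat G C b F u) : ∀ k n, ¬ F (n+k) → F n → ∀ v ∈ C (b n), ∀ w, G.Adj v w →
    u (n+1) v ≤ u n w := by
  intro k
  induction k with
  | zero => intro n h h'; exact absurd h' h
  | succ k ih =>
    intro n hk hF v hv w hvw
    have hw : w ∈ C (b (n+1)) := by rw [D.alt n hF]; exact D.bip _ _ _ hvw hv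
    have hw' : w ∉ C (b n) := by
      rw [← D.cc]; exact D.bip _ _ _ hvw hv
    rw [← D.fix n w hw']
    by_cases hF1 : F (n+1)
    · have h1 := ih (n+1) (by rwa [show n + 1 + k = n + (k+1) by ring]) hF1 w hw
      have h2 := D.fl (n+1) w hF1 hw
      obtain ⟨v', hv', hne⟩ := D.ex2 w v hvw.symm
      have h3 := le_adjSum₂ D.hval _ (D.nn (n+1)) hvw.symm hv' hne
      have h4 := h1 v' hv'
      linarith
    · have h2 := D.nf (n+1) w hF1 hw
      have h3 := D.nn (n+2) w
      have h4 := le_adjSum D.hval _ (D.nn (n+1)) hvw.symm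
      change 0 ≤ u (n+1+1) w at h3
      linarith

lemma mono (D : GDat G C b F u) (v : V) : Antitone (fun n => u n v) := by
  refine antitone_nat_of_succ_le ?_
  intro n
  by_cases hv : v ∈ C (b n)
  · by_cases hF : F n
    · obtain ⟨m, hm, hm'⟩ := D.infF n
      obtain ⟨k, rfl⟩ := Nat.exists_eq_add_of_le hm
      have h1 := D.keyP k n hm' hF v hv
      have h2 := D.fl n v hF hv
      obtain ⟨w, hw⟩ := D.ex1 v
      obtain ⟨w', hw', hne⟩ := D.ex2 v w hw
      have h3 := le_adjSum₂ D.hval _ (D.nn n) hw hw' hne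
      have := h1 w hw
      have := h1 w' hw'
      linarith
    · have := D.nf n v hF hv
      have := D.snn n v
      linarith
  · exact (D.fix n v hv).le

lemma small (D : GDat G C b F u) (v : V) (h : ∀ ε : ℝ, 0 < ε → ∃ n, u n v < ε) :
    Filter.Tendsto (fun n => u n v) Filter.atTop (nhds 0) := by
  rw [Metric.tendsto_atTop]
  intro ε hε
  obtain ⟨N, hN⟩ := h ε hε
  refine ⟨N, fun n hn => ?_⟩
  rw [Real.dist_eq, sub_zero, abs_of_nonneg (D.nn n v)]
  exact (D.mono v hn).trans_lt hN

lemma diff_small (D : GDat G C b F u) (v : V) (ε : ℝ) (hε : 0 < ε) :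
    ∃ N, ∀ n, N ≤ n → u n v - u (n+1) v < ε := by
  have hb : BddBelow (Set.range (fun n => u n v)) := ⟨0, by rintro _ ⟨n, rfl⟩; exact D.nn n v⟩
  have ht := tendsto_atTop_ciInf (D.mono v) hb
  have ht' := ht.sub (ht.comp (Filter.tendsto_add_atTop_nat 1))
  rw [sub_self] at ht'
  obtain ⟨N, hN⟩ := Filter.eventually_atTop.mp (ht'.eventually (gt_mem_nhds hε))
  exact ⟨N, hN⟩

lemma main (D : GDat G C b F u) (v : V) :
    Filter.Tendsto (fun n => u n v) Filter.atTop (nhds 0) := by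
  have hc : ∃ c, ∀ N, ∃ n, N ≤ n ∧ ¬ F n ∧ b n = c := by
    by_contra hcon
    push Not at hcon
    obtain ⟨N1, h1⟩ := hcon true
    obtain ⟨N2, h2⟩ := hcon false
    obtain ⟨n, hn, hF⟩ := D.infF (N1 + N2)
    have := h1 n (by omega) hF
    have := h2 n (by omega) hF
    simp_all
  obtain ⟨c, hc⟩ := hc
  have hB : ∀ w, w ∉ C c → Filter.Tendsto (fun n => u n w) Filter.atTop (nhds 0) := by
    intro w hw
    apply D.small
    intro ε hε
    obtain ⟨a, ha⟩ := D.ex1 w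
    have haC : a ∈ C c := by
      rw [← D.cc] at hw
      simpa using D.bip _ _ _ ha hw
    obtain ⟨N, hN⟩ := D.diff_small a ε hε
    obtain ⟨n, hn, hF, hb⟩ := hc N
    refine ⟨n, ?_⟩
    have h1 := hN n hn
    have h2 := D.nf n a hF (by rwa [hb])
    have h3 := le_adjSum D.hval _ (D.nn n) ha.symm
    linarith
  by_cases hv : v ∈ C c
  · apply D.small
    intro ε hε
    obtain ⟨w, hw⟩ := D.ex1 v
    have hw1 := D.bip _ _ _ hw hv
    have ht := hB w ((D.cc _ _).mp hw1)
    obtain ⟨N, hN⟩ := Filter.eventually_atTop.mp (ht.eventually (gt_mem_nhds (half_pos hε)))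
    obtain ⟨n, hn, hb⟩ := D.infb (!c) N
    refine ⟨n, ?_⟩
    have h1 := hN n hn
    have h2 := hN (n+1) (by omega)
    have h3 := le_adjSum D.hval _ (D.nn n) hw.symm
    have h4 := D.nn (n+1) w
    have h5 := D.nn n w
    by_cases hF : F n
    · have := D.fl n w hF (by rwa [hb]); linarith
    · have := D.nf n w hF (by rwa [hb]); linarith
  · exact hB v hv

end GDat
end graphpart

lemma act_mul (l : ℝ) (a c : F2) (x : Fin 2 → ℝ) : act l (a * c) x = act l a (act l c x) := by
  unfold act
  rw [Matrix.mulVec_mulVec, map_mul]; rfl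

lemma act_one (l : ℝ) (x : Fin 2 → ℝ) : act l 1 x = x := by
  simp [act]

lemma act_smul (l : ℝ) (a : F2) (c : ℝ) (x : Fin 2 → ℝ) : act l a (c • x) = c • act l a x := by
  simp [act, Matrix.mulVec_smul]

lemma act_h (l : ℝ) (x : Fin 2 → ℝ) : act l gh x 0 = x 0 + l * x 1 ∧ act l gh x 1 = x 1 := by
  simp [act, rho, gh, hmat, Matrix.mulVec, dotProduct, Fin.sum_univ_two]

lemma act_v (l : ℝ) (x : Fin 2 → ℝ) : act l gv x 1 = x 1 + l * x 0 ∧ act l gv x 0 = x 0 := by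
  simp [act, rho, gv, vmat, Matrix.mulVec, dotProduct, Fin.sum_univ_two, add_comm]

lemma act_hi (l : ℝ) (x : Fin 2 → ℝ) :
    act l gh⁻¹ x 0 = x 0 - l * x 1 ∧ act l gh⁻¹ x 1 = x 1 := by
  have h := act_h l (act l gh⁻¹ x)
  rw [← act_mul, mul_inv_cancel, act_one] at h
  have h1 := h.1
  rw [← h.2] at h1
  exact ⟨by linarith, h.2.symm⟩

lemma act_vi (l : ℝ) (x : Fin 2 → ℝ) :
    act l gv⁻¹ x 1 = x 1 - l * x 0 ∧ act l gv⁻¹ x 0 = x 0 := by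
  have h := act_v l (act l gv⁻¹ x)
  rw [← act_mul, mul_inv_cancel, act_one] at h
  have h1 := h.1
  rw [← h.2] at h1
  exact ⟨by linarith, h.2.symm⟩

lemma sign_struct (z : ℝ) (hz : z ≠ 0) (s : Bool) (hs : if s then 0 < z else z < 0) (y : ℝ)
    (hy : y = 0 ∨ (if s then 0 < y else y < 0)) : y = (z / |z|) * |y| := by
  cases s
  · simp only [Bool.false_eq_true, if_false] at hs hy
    rw [abs_of_neg hs, div_neg, div_self hz, abs_of_nonpos (by rcases hy with h | h <;> linarith)]
    ring
  · simp only [if_true] at hs hy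
    rw [abs_of_pos hs, div_self hz, abs_of_nonneg (by rcases hy with h | h <;> linarith)]
    ring

lemma sgn_pm (z : ℝ) (hz : z ≠ 0) : (0 < z ∧ z / |z| = 1) ∨ (z < 0 ∧ z / |z| = -1) := by
  rcases lt_or_gt_of_ne hz with h | h
  · right; rw [abs_of_neg h, div_neg, div_self hz]; exact ⟨h, rfl⟩
  · left; rw [abs_of_pos h, div_self hz]; exact ⟨h, rfl⟩

/-- the scalar update: `a` changed coordinate, `c` other coordinate -/
lemma update_abs (a a' c e y y' S : ℝ) (ha : a ≠ 0) (ha' : a' ≠ 0) (hc : c ≠ 0)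
    (he : e = 1 ∨ e = -1)
    (hneg : e * a * c < 0) (hy : y = (a / |a|) * |y|) (hy' : y' = (a' / |a'|) * |y'|)
    (hst : y' = y + e * ((c / |c|) * S)) :
    ((a' * a < 0) → |y'| = S - |y|) ∧ (¬ (a' * a < 0) → |y'| = |y| - S) := by
  set U := |y|
  set U' := |y'|
  rw [hy, hy'] at hst
  rcases he with rfl | rfl <;> rcases sgn_pm a ha with ⟨h1, h2⟩ | ⟨h1, h2⟩ <;>
   rcases sgn_pm a' ha' with ⟨h3, h4⟩ | ⟨h3, h4⟩ <;> rcases sgn_pm c hc with ⟨h5, h6⟩ | ⟨h5, h6⟩ <;>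
   rw [h2, h4, h6] at hst <;>
   first
   | (exfalso; have := mul_pos h1 h5; linarith)
   | (exfalso; have := mul_pos_of_neg_of_neg h1 h5; linarith)
   | (exfalso; have := mul_neg_of_neg_of_pos h1 h5; linarith)
   | (exfalso; have := mul_neg_of_pos_of_neg h1 h5; linarith)
   | (refine ⟨fun h => ?_, fun h => ?_⟩ <;> first
      | linarith
      | (exfalso; have := mul_pos h3 h1; linarith)
      | (exfalso; have := mul_pos_of_neg_of_neg h3 h1; linarith)
      | (exfalso; exact h (mul_neg_of_neg_of_pos h3 h1))
      | (exfalso; exact h (mul_neg_of_pos_of_neg h3 h1)))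

theorem stmt19 {V : Type} [Countable V] [Infinite V]
    (G : SimpleGraph V) (A : Set V)
    (hconn : G.Connected) (hval : BoundedValance G) (hbip : BipartWith G A)
    (hnoval1 : ∀ v : V, valance G v ≠ 1)
    (l : ℝ) (hl : 2 ≤ l) (x : Fin 2 → ℝ) (hx : x ∈ Circ)
    (hren : Renormalizable l x)
    (g : ℕ → F2) (hg : IsGeodesicRay g) (hgs : IsShrinkingSeq l g x)
    (s : ℕ → SP) (hs : ∀ n, act l (g n) x ∈ Quad (s n))
    (U : F2 →* Equiv.Perm (V → ℝ))
    (hUh : ∀ k : ℤ, ∀ f : V → ℝ, U (gh ^ k) f = Hop G A k f)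
    (hUv : ∀ k : ℤ, ∀ f : V → ℝ, U (gv ^ k) f = Vop G A k f)
    (f : V → ℝ) (hsurv : ∀ n : ℕ, U (g n) f ∈ QuadV A (s n)) :
    ∀ v : V, (Antitone fun n => |U (g n) f v|) ∧
      Filter.Tendsto (fun n => |U (g n) f v|) Filter.atTop (nhds 0) := by
  have key : ∀ n, ∃ (b : Bool) (e : ℤ), (e = 1 ∨ e = -1) ∧
      g (n+1) * (g n)⁻¹ = (if b then gh else gv) ^ e := by
    intro n
    have h := hg.2.1 n
    simp only [gens, Set.mem_insert_iff, Set.mem_singleton_iff] at h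
    rcases h with h | h | h | h <;> rw [h]
    · exact ⟨true, 1, by simp⟩
    · exact ⟨false, 1, by simp⟩
    · exact ⟨true, -1, by simp⟩
    · exact ⟨false, -1, by simp⟩
  choose b e he hstep using key
  have hgn : ∀ n, g (n+1) = (if b n then gh else gv) ^ e n * g n := by
    intro n; rw [← hstep]; group
  have hpn : ∀ n, act l (g n) x 0 ≠ 0 := by
    intro n h; have := (hs n).1; rw [h] at this; split_ifs at this <;> exact lt_irrefl _ this
  have hqn : ∀ n, act l (g n) x 1 ≠ 0 := by
    intro n h; have := (hs n).2; rw [h] at this; split_ifs at this <;> exact lt_irrefl _ this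
  have D : RealDat l (fun n => act l (g n) x 0) (fun n => act l (g n) x 1) b
      (fun n => (e n : ℝ)) := by
    refine ⟨hl, hpn, hqn, ?_, ?_, ?_, ?_, ?_⟩
    · intro n; rcases he n with h | h <;> rw [h] <;> norm_num
    · intro n hb
      rw [hgn n, hb, act_mul]
      rcases he n with h | h <;> rw [h]
      · have := act_h l (act l (g n) x)
        simp [this]
      · have := act_hi l (act l (g n) x)
        simp [this]; ring
    · intro n hb
      rw [hgn n, hb, act_mul]
      rcases he n with h | h <;> rw [h]
      · have := act_v l (act l (g n) x)
        simp [this]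
      · have := act_vi l (act l (g n) x)
        simp [this]; ring
    · intro n hb
      have h2 := hg.2.2 n
      rw [hgn (n+1), hgn n, hb] at h2
      by_contra hne
      have hne' : e (n+1) ≠ e n := fun h => hne (by simp [h])
      apply h2
      have : e (n+1) = - e n := by
        rcases he n with h | h <;> rcases he (n+1) with h' | h' <;> simp_all
      rw [this]; group
    · intro ε hε
      obtain ⟨i, hi⟩ := hgs (Real.sqrt ε) (Real.sqrt_pos.mpr hε)
      refine ⟨i, ?_⟩
      unfold nrm at hi
      exact (Real.sqrt_lt_sqrt_iff (by positivity)).mp hi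
  have hQ : ∀ n, 0 < act l (g n) x 0 * act l (g n) x 1 →
      act l (g n) x 0 ^ 2 + act l (g n) x 1 ^ 2 - l * (act l (g n) x 0 * act l (g n) x 1) ≠ 0 := by
    intro n _ h0
    have hq := hqn n
    set P := act l (g n) x with hP
    have hE : act l (gh * gv⁻¹) P = ((P 1 - l * P 0) / P 1) • P := by
      have h1 := act_vi l P
      have h2 := act_h l (act l gv⁻¹ P)
      rw [← act_mul, h1.1, h1.2] at h2
      ext i
      fin_cases i
      · simp only [Fin.zero_eta, Pi.smul_apply, smul_eq_mul]
        rw [h2.1]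
        field_simp
        linear_combination l * h0
      · simp only [Fin.mk_one, Pi.smul_apply, smul_eq_mul]
        rw [h2.2]
        field_simp
    apply hren.2 (g n)⁻¹ ((P 1 - l * P 0) / P 1)
    rw [inv_inv, act_mul, act_mul, ← hP, hE, act_smul, hP, ← act_mul, inv_mul_cancel, act_one]
  have hsgn : ∀ n v, (v ∈ A → U (g n) f v = (act l (g n) x 0 / |act l (g n) x 0|) * |U (g n) f v|) ∧
      (v ∉ A → U (g n) f v = (act l (g n) x 1 / |act l (g n) x 1|) * |U (g n) f v|) := by
    intro n v
    exact ⟨fun hv => sign_struct _ (hpn n) _ (hs n).1 _ ((hsurv n).1 v hv),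
      fun hv => sign_struct _ (hqn n) _ (hs n).2 _ ((hsurv n).2 v hv)⟩
  have hUt : ∀ n, b n = true → U (g (n+1)) f = Hop G A (e n) (U (g n) f) := by
    intro n hb; rw [hgn n, hb, map_mul, ← hUh]; rfl
  have hUf : ∀ n, b n = false → U (g (n+1)) f = Vop G A (e n) (U (g n) f) := by
    intro n hb; rw [hgn n, hb, map_mul, ← hUv]; rfl
  have hflp : ∀ n, b n = true → (RealDat.Flip (fun n => act l (g n) x 0) (fun n => act l (g n) x 1) n
      ↔ act l (g (n+1)) x 0 * act l (g n) x 0 < 0) := by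
    intro n hb
    have h := (D.st n hb).2
    simp only [RealDat.Flip]
    rw [h]
    have : 0 < act l (g n) x 1 ^ 2 := by have := hqn n; positivity
    constructor <;> intro h' <;> nlinarith
  have hflq : ∀ n, b n = false → (RealDat.Flip (fun n => act l (g n) x 0) (fun n => act l (g n) x 1) n
      ↔ act l (g (n+1)) x 1 * act l (g n) x 1 < 0) := by
    intro n hb
    have h := (D.sf n hb).2
    simp only [RealDat.Flip]
    rw [h]
    have : 0 < act l (g n) x 0 ^ 2 := by have := hpn n; positivity
    constructor <;> intro h' <;> nlinarith
  have hupt : ∀ n v, b n = true → v ∈ A → _ := fun n v hb hv =>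
    update_abs (act l (g n) x 0) (act l (g (n+1)) x 0) (act l (g n) x 1) (e n)
      (U (g n) f v) (U (g (n+1)) f v) (adjSum G (fun w => |U (g n) f w|) v)
      (hpn n) (hpn (n+1)) (hqn n) (D.he n) (D.neg n) ((hsgn n v).1 hv) ((hsgn (n+1) v).1 hv) (by
        rw [← adjSum_congr_mul hval (U (g n) f) (fun w => |U (g n) f w|) _ v
          (fun w hw => (hsgn n w).2 ((hbip v w hw).mp hv)), hUt n hb]
        simp [Hop, hv])
  have hupf : ∀ n v, b n = false → v ∉ A → _ := fun n v hb hv =>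
    update_abs (act l (g n) x 1) (act l (g (n+1)) x 1) (act l (g n) x 0) (e n)
      (U (g n) f v) (U (g (n+1)) f v) (adjSum G (fun w => |U (g n) f w|) v)
      (hqn n) (hqn (n+1)) (hpn n) (D.he n) (by have := D.neg n; linarith)
      ((hsgn n v).2 hv) ((hsgn (n+1) v).2 hv) (by
        rw [← adjSum_congr_mul hval (U (g n) f) (fun w => |U (g n) f w|) _ v
          (fun w hw => (hsgn n w).1 ((hbip w v hw.symm).mpr hv)), hUf n hb]
        simp [Vop, hv])
  have E : GDat G (fun c => if c then A else Aᶜ) b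
      (RealDat.Flip (fun n => act l (g n) x 0) (fun n => act l (g n) x 1))
      (fun n v => |U (g n) f v|) := by
    refine ⟨hval, adj_exists hconn, fun v w h => adj_exists₂ hconn hval hnoval1 h, ?_, ?_,
      fun n v => abs_nonneg _, ?_, ?_, ?_, D.flip_b, D.inf_nonflip hQ, D.inf_both⟩
    · intro c v; cases c <;> simp
    · intro c v w hvw
      have := hbip v w hvw
      cases c <;> simp <;> tauto
    · intro n v hv
      cases hb : b n
      · rw [hb] at hv
        rw [hUf n hb]
        have hv' : v ∈ A := by simpa using hv
        simp [Vop, hv']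
      · rw [hb] at hv
        rw [hUt n hb]
        have hv' : v ∉ A := by simpa using hv
        simp [Hop, hv']
    · intro n v hF hv
      cases hb : b n
      · rw [hb] at hv
        exact (hupf n v hb (by simpa using hv)).1 ((hflq n hb).mp hF)
      · rw [hb] at hv
        exact (hupt n v hb (by simpa using hv)).1 ((hflp n hb).mp hF)
    · intro n v hF hv
      cases hb : b n
      · rw [hb] at hv
        exact (hupf n v hb (by simpa using hv)).2 (fun h => hF ((hflq n hb).mpr h))
      · rw [hb] at hv
        exact (hupt n v hb (by simpa using hv)).2 (fun h => hF ((hflp n hb).mpr h))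
  exact fun v => ⟨E.mono v, E.main v⟩
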